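/- arXiv:math/9805120 — 2 statements merged into one kernel-verified Lean document; each statement's English description precedes it below -/
import Mathlib

section
/- Let N = 2n+1 be odd and define M ∈ M_N(ℂ) by: M_{ab} = (1/√2)(δ_{ab} + δ_{a,b′}) for a ≤ n; M_{n+1,n+1} = i and M_{n+1,b} = 0 for b ≠ n+1; and M_{ab} = (1/√2)(i δ_{a,b′} − i δ_{ab}) for a ≥ n+2. Then M is invertible and (M⁻¹)ᵗ J M⁻¹ is a real diagonal matrix with exactly one diagonal entry equal to −1 (the middle one) and the remaining N−1 diagonal entries equal to +1, i.e. the q = 1 metric acquires Lorentzian signature (N−1, 1). This identifies the real form associated to the conjugation ∗♯ (the compact conjugation composed with the involutive automorphism ♯) as the odd-dimensional q-Lorentz group SO_q(N−1, 1). -/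
noncomputable section

open Matrix

/-- The `q = 1` quantum metric of `SO_q(N)`: `J_{ab} = δ_{a,b′}` with `a′ = N+1−a`
(`Fin.rev` in the 0-indexed encoding). -/
def Jmet (N : ℕ) : Matrix (Fin N) (Fin N) ℂ :=
  Matrix.of fun a b => if b = a.rev then 1 else 0

/-!
Write `M = A + B J` with `A`, `B` diagonal, with entries `α`, `β`. Since `J` is a symmetric
involution and conjugation by `J` reverses the entries of a diagonal matrix, `M J Mᵀ = D + E J`,
where `D` has entries `2 α_a β_a` and `E` has entries `α_a α_{a′} + β_a β_{a′}`. For the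
coefficients at hand, `D` is the identity except for a `0` in the middle, while `E` vanishes except
for a `-1` in the middle, where `a = a′`; so `M J Mᵀ` is the Lorentzian diagonal matrix. Inverting
this equation, with `J` and the right-hand side both their own inverses, gives the claim.
-/

section Congruence

variable {ι R : Type*} [Fintype ι] [DecidableEq ι] [CommRing R]

theorem inv_transpose_mul_inv_mul_inv (M G : Matrix ι ι R) :
    (M⁻¹)ᵀ * G⁻¹ * M⁻¹ = (M * G * Mᵀ)⁻¹ := by
  rw [Matrix.mul_inv_rev, Matrix.mul_inv_rev, transpose_nonsing_inv, Matrix.mul_assoc]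

theorem isUnit_det_of_isUnit_det_mul_mul {M G K : Matrix ι ι R} (h : IsUnit (M * G * K).det) :
    IsUnit M.det := by
  rw [det_mul, det_mul, mul_assoc] at h
  exact isUnit_of_mul_isUnit_left h

end Congruence

section PermutationMatrix

variable {ι R : Type*} [Fintype ι] [DecidableEq ι]

theorem permMatrix_mul_diagonal [NonAssocSemiring R] (σ : Equiv.Perm ι) (v : ι → R) :
    σ.permMatrix R * diagonal v = diagonal (v ∘ σ) * σ.permMatrix R := by
  ext i j
  by_cases h : σ i = j <;> simp [PEquiv.toMatrix_apply, h]

theorem diagonal_mul_permMatrix_of_support [NonAssocSemiring R] {σ : Equiv.Perm ι} {v : ι → R}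
    (hv : ∀ i, v i ≠ 0 → σ i = i) : diagonal v * σ.permMatrix R = diagonal v := by
  ext i j
  by_cases hi : v i = 0
  · simp [diagonal_apply, hi]
  · simp [PEquiv.toMatrix_apply, diagonal_apply, hv i hi]

theorem permMatrix_mul_self [NonAssocSemiring R] {σ : Equiv.Perm ι} (hσ : σ⁻¹ = σ) :
    σ.permMatrix R * σ.permMatrix R = 1 := by
  rw [← permMatrix_mul, inv_eq_iff_mul_eq_one.mp hσ, permMatrix_one]

/-- The Gram matrix, for the form given by `P = σ.permMatrix R`, of the rows
`α i • e i + β i • e (σ i)`. -/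
theorem gram_diagonal_add_diagonal_mul_permMatrix [CommSemiring R] {σ : Equiv.Perm ι}
    (hσ : σ⁻¹ = σ) (α β : ι → R) :
    (diagonal α + diagonal β * σ.permMatrix R) * σ.permMatrix R *
        (diagonal α + diagonal β * σ.permMatrix R)ᵀ =
      diagonal (fun i => 2 * (α i * β i)) +
        diagonal (fun i => α i * α (σ i) + β i * β (σ i)) * σ.permMatrix R := by
  set P := σ.permMatrix R with hP
  have P_sq : P * P = 1 := permMatrix_mul_self hσ
  have P_transpose : Pᵀ = P := by rw [hP, transpose_permMatrix, hσ]
  have P_mul_diagonal (v : ι → R) : P * diagonal v = diagonal (v ∘ σ) * P :=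
    permMatrix_mul_diagonal σ v
  calc (diagonal α + diagonal β * P) * P * (diagonal α + diagonal β * P)ᵀ
      = (diagonal α * P + diagonal β) * (diagonal α + P * diagonal β) := by
        rw [Matrix.add_mul, Matrix.mul_assoc (diagonal β), P_sq, Matrix.mul_one, transpose_add,
          transpose_mul, P_transpose, diagonal_transpose, diagonal_transpose]
    _ = diagonal α * (P * diagonal α) + diagonal β * diagonal α +
          (diagonal α * (P * P * diagonal β) + diagonal β * (P * diagonal β)) := by
        simp only [Matrix.add_mul, Matrix.mul_add, Matrix.mul_assoc]
    _ = (diagonal α * diagonal β + diagonal β * diagonal α) +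
          (diagonal α * diagonal (α ∘ σ) + diagonal β * diagonal (β ∘ σ)) * P := by
        rw [P_sq, Matrix.one_mul, P_mul_diagonal, P_mul_diagonal, Matrix.add_mul,
          Matrix.mul_assoc, Matrix.mul_assoc]
        abel
    _ = _ := by
        simp only [diagonal_mul_diagonal, diagonal_add, Function.comp_apply, two_mul,
          mul_comm (β _) (α _)]

end PermutationMatrix

theorem Jmet_eq_permMatrix (N : ℕ) : Jmet N = (Fin.revPerm : Equiv.Perm (Fin N)).permMatrix ℂ := by
  ext a b
  simp [Jmet, PEquiv.toMatrix_apply, eq_comm]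

theorem inv_Jmet (N : ℕ) : (Jmet N)⁻¹ = Jmet N := by
  rw [Jmet_eq_permMatrix]
  exact inv_eq_right_inv (permMatrix_mul_self rfl)

theorem inv_sqrt_two_mul_self : ((Real.sqrt 2 : ℂ))⁻¹ * ((Real.sqrt 2 : ℂ))⁻¹ = 2⁻¹ := by
  rw [← mul_inv, ← Complex.ofReal_mul, Real.mul_self_sqrt zero_le_two, Complex.ofReal_ofNat]

/-- The coefficient of `δ_{ab}` in row `a` of the matrix `M` (rows are indexed from `0`). -/
def diagCoeff (n : ℕ) (a : Fin (2 * n + 1)) : ℂ :=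
  if (a : ℕ) < n then ((Real.sqrt 2 : ℂ))⁻¹
  else if (a : ℕ) = n then Complex.I
  else -(((Real.sqrt 2 : ℂ))⁻¹ * Complex.I)

/-- The coefficient of `δ_{a,b′}` in row `a` of the matrix `M`. The middle row, where the two deltas
coincide, is attributed entirely to `diagCoeff`. -/
def antidiagCoeff (n : ℕ) (a : Fin (2 * n + 1)) : ℂ :=
  if (a : ℕ) < n then ((Real.sqrt 2 : ℂ))⁻¹
  else if (a : ℕ) = n then 0
  else ((Real.sqrt 2 : ℂ))⁻¹ * Complex.I

/-- The matrix `M` of the change to a basis in which the metric `Jmet` is Lorentzian, split into its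
diagonal and antidiagonal parts. -/
def lorentzBasis (n : ℕ) : Matrix (Fin (2 * n + 1)) (Fin (2 * n + 1)) ℂ :=
  diagonal (diagCoeff n) + diagonal (antidiagCoeff n) * Jmet (2 * n + 1)

theorem lorentzBasis_apply (n : ℕ) (a b : Fin (2 * n + 1)) :
    lorentzBasis n a b =
      diagCoeff n a * (if b = a then 1 else 0) +
        antidiagCoeff n a * (if b = a.rev then 1 else 0) := by
  simp [lorentzBasis, Jmet, diagonal_apply, eq_comm]

/-- The Lorentzian metric of signature `(2n, 1)`, with the negative direction in the middle. -/
def lorentzMetric (n : ℕ) : Matrix (Fin (2 * n + 1)) (Fin (2 * n + 1)) ℂ :=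
  diagonal fun a => if (a : ℕ) = n then -1 else 1

theorem two_mul_diagCoeff_mul_antidiagCoeff (n : ℕ) (a : Fin (2 * n + 1)) :
    2 * (diagCoeff n a * antidiagCoeff n a) = if (a : ℕ) = n then 0 else 1 := by
  obtain ha | ha | ha := lt_trichotomy (a : ℕ) n
  · simp [diagCoeff, antidiagCoeff, ha, ha.ne, inv_sqrt_two_mul_self]
  · simp [antidiagCoeff, ha]
  · simp only [diagCoeff, antidiagCoeff, ha.not_gt, ha.ne', if_false]
    linear_combination -2 * Complex.I ^ 2 * inv_sqrt_two_mul_self - Complex.I_sq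

theorem diagCoeff_mul_rev_add_antidiagCoeff_mul_rev (n : ℕ) (a : Fin (2 * n + 1)) :
    diagCoeff n a * diagCoeff n a.rev + antidiagCoeff n a * antidiagCoeff n a.rev =
      if (a : ℕ) = n then -1 else 0 := by
  have val_rev : (a.rev : ℕ) = 2 * n - a := by rw [Fin.val_rev]; lia
  obtain ha | ha | ha := lt_trichotomy (a : ℕ) n
  · have rev_gt : n < (a.rev : ℕ) := by lia
    simp [-Fin.val_rev, diagCoeff, antidiagCoeff, ha, ha.ne, rev_gt.not_gt, rev_gt.ne']
  · have rev_eq : (a.rev : ℕ) = n := by lia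
    simp [-Fin.val_rev, diagCoeff, antidiagCoeff, ha, rev_eq]
  · have rev_lt : (a.rev : ℕ) < n := by lia
    simp [-Fin.val_rev, diagCoeff, antidiagCoeff, ha.not_gt, ha.ne', rev_lt, mul_comm]

theorem lorentzBasis_mul_Jmet_mul_transpose (n : ℕ) :
    lorentzBasis n * Jmet (2 * n + 1) * (lorentzBasis n)ᵀ = lorentzMetric n := by
  have rev_eq_self (a : Fin (2 * n + 1)) (ha : (if (a : ℕ) = n then -1 else 0 : ℂ) ≠ 0) :
      Fin.revPerm a = a := by
    have ha : (a : ℕ) = n := by simpa using ha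
    rw [Fin.revPerm_apply, Fin.ext_iff, Fin.val_rev]
    lia
  rw [lorentzBasis, Jmet_eq_permMatrix, gram_diagonal_add_diagonal_mul_permMatrix rfl]
  simp only [Fin.revPerm_apply, two_mul_diagCoeff_mul_antidiagCoeff,
    diagCoeff_mul_rev_add_antidiagCoeff_mul_rev]
  rw [diagonal_mul_permMatrix_of_support rev_eq_self, diagonal_add, lorentzMetric]
  congr 1 with a
  split_ifs <;> simp

theorem lorentzMetric_mul_self (n : ℕ) : lorentzMetric n * lorentzMetric n = 1 := by
  rw [lorentzMetric, diagonal_mul_diagonal, ← diagonal_one]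
  congr 1 with a
  split_ifs <;> simp

theorem isUnit_det_lorentzBasis (n : ℕ) : IsUnit (lorentzBasis n).det := by
  apply isUnit_det_of_isUnit_det_mul_mul
  rw [lorentzBasis_mul_Jmet_mul_transpose]
  exact isUnit_det_of_right_inverse (lorentzMetric_mul_self n)

theorem inv_lorentzBasis_transpose_mul_Jmet_mul_inv (n : ℕ) :
    ((lorentzBasis n)⁻¹)ᵀ * Jmet (2 * n + 1) * (lorentzBasis n)⁻¹ = lorentzMetric n := by
  calc ((lorentzBasis n)⁻¹)ᵀ * Jmet (2 * n + 1) * (lorentzBasis n)⁻¹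
      = (lorentzBasis n * Jmet (2 * n + 1) * (lorentzBasis n)ᵀ)⁻¹ := by
        rw [← inv_transpose_mul_inv_mul_inv, inv_Jmet]
    _ = (lorentzMetric n)⁻¹ := by rw [lorentzBasis_mul_Jmet_mul_transpose]
    _ = lorentzMetric n := inv_eq_right_inv (lorentzMetric_mul_self n)

/-- For `N = 2n+1` odd, the matrix `M` with
`M_{ab} = (1/√2)(δ_{ab} + δ_{a,b′})` for `a ≤ n`, `M_{n+1,n+1} = i` (and
`M_{n+1,b} = 0` for `b ≠ n+1`), and `M_{ab} = (1/√2)(i δ_{a,b′} − i δ_{ab})` for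
`a ≥ n+2` is invertible, and `(M⁻¹)ᵗ J M⁻¹` is a real diagonal matrix with exactly
one diagonal entry `−1` (the middle one) and the remaining `N−1` entries `+1`: the
`q = 1` metric acquires Lorentzian signature `(N−1, 1)`, identifying the real form
associated to the conjugation `∗♯` as the odd-dimensional `q`-Lorentz group
`SO_q(N−1, 1)`. -/
theorem lorentz_basis_odd (n : ℕ) (hn : 1 ≤ n) :
    ∀ M : Matrix (Fin (2 * n + 1)) (Fin (2 * n + 1)) ℂ,
      M = Matrix.of (fun a b : Fin (2 * n + 1) =>
        if a.1 + 1 ≤ n then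
          ((Real.sqrt 2 : ℂ))⁻¹ *
            ((if b = a then 1 else 0) + (if b = a.rev then 1 else 0))
        else if a.1 + 1 = n + 1 then (if b = a then Complex.I else 0)
        else
          ((Real.sqrt 2 : ℂ))⁻¹ *
            (Complex.I * (if b = a.rev then 1 else 0) -
              Complex.I * (if b = a then 1 else 0))) →
      IsUnit M.det ∧
      (M⁻¹)ᵀ * Jmet (2 * n + 1) * M⁻¹ =
        Matrix.diagonal (fun a : Fin (2 * n + 1) =>
          if a.1 + 1 = n + 1 then (-1 : ℂ) else 1) := by
  intro M hM
  have M_eq : M = lorentzBasis n := by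
    ext a b
    rw [hM, lorentzBasis_apply, of_apply, diagCoeff, antidiagCoeff]
    simp only [Nat.succ_le_iff, Nat.add_right_cancel_iff]
    split_ifs <;> ring
  rw [M_eq]
  refine ⟨isUnit_det_lorentzBasis n, ?_⟩
  simp only [Nat.add_right_cancel_iff]
  exact inv_lorentzBasis_transpose_mul_Jmet_mul_inv n
end
end

section
/- Let N = 2n be even, fix signs ε_j ∈ {+1, −1} with ε_{j′} = −ε_j for all j, and let D″ = i · diag(ε_1, …, ε_{2n}). Then: (i) D″² = −1_N; (ii) D″_{aa} · D″_{a′a′} = 1 for all a, hence R · (D″ ⊗ D″) = (D″ ⊗ D″) · R and D″ᵗ C D″ = C; (iii) conj(D″) = −D″ = Cᵗ D″ Cᵗ. Thus D″ defines an involutive Hopf algebra automorphism T ↦ D″ T D″⁻¹ of SO_q(N) commuting with the compact conjugation, whose composition with it yields the real forms SO*_q(2n). -/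
noncomputable section

open Matrix Kronecker

/-- The integer `2·ρ_a` for the 1-indexed index `a` of `{1,…,N}` (represented by
`a : Fin N`, whose 1-indexed value is `a.1 + 1`), where
`(ρ_1,…,ρ_N) = (N/2−1, …, 1/2, 0, −1/2, …, −N/2+1)` for `N` odd and
`(N/2−1, …, 1, 0, 0, −1, …, −N/2+1)` for `N` even.  Powers `q^{ρ_a}` are
interpreted as `p^(2·ρ_a)`. -/
def rhoTwo (N : ℕ) (a : Fin N) : ℤ :=
  if 2 * ((a.1 : ℤ) + 1) < (N : ℤ) + 1 then (N : ℤ) - 2 * ((a.1 : ℤ) + 1)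
  else if (N : ℤ) + 1 < 2 * ((a.1 : ℤ) + 1) then (N : ℤ) + 2 - 2 * ((a.1 : ℤ) + 1)
  else 0

/-- The quantum metric `C_{ab} = q^{−ρ_a} δ_{a,b′} = p^{−2ρ_a} δ_{b,a′}`, where the
primed index `a′ = N+1−a` is `Fin.rev a` in the 0-indexed encoding. -/
def qMetric (N : ℕ) (p : ℂ) : Matrix (Fin N) (Fin N) ℂ :=
  Matrix.of fun a b => if b = a.rev then p ^ (-(rhoTwo N a)) else 0

/-- The quantum orthogonal R-matrix, rows and columns indexed by pairs `(a,b)`, with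
`q = p²`; its only nonzero entries are those listed in FRT:
`R^{aa}_{aa} = q` (`a ≠ a′`), `R^{aa}_{aa} = 1` (`a = a′`), `R^{aa′}_{aa′} = q⁻¹`
(`a ≠ a′`), `R^{ab}_{ab} = 1` (`a ≠ b`, `a′ ≠ b`), `R^{ab}_{ba} = q − q⁻¹`
(`a > b`, `a′ ≠ b`), `R^{aa′}_{a′a} = (q − q⁻¹)(1 − q^{ρ_a−ρ_{a′}})` (`a > a′`), and
`R^{aa′}_{bb′} = −(q − q⁻¹) q^{ρ_a−ρ_b}` (`a > b`, `a′ ≠ b`). -/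
def qRmat (N : ℕ) (p : ℂ) : Matrix (Fin N × Fin N) (Fin N × Fin N) ℂ :=
  Matrix.of fun x y =>
    if x.1 = x.2 ∧ y.1 = x.1 ∧ y.2 = x.1 then
      (if x.1 = x.1.rev then 1 else p ^ (2 : ℤ))
    else if x.2 = x.1.rev ∧ x.1 ≠ x.1.rev ∧ y = x then (p ^ (2 : ℤ))⁻¹
    else if x.1 ≠ x.2 ∧ x.1.rev ≠ x.2 ∧ y = x then 1
    else if x.2 < x.1 ∧ x.1.rev ≠ x.2 ∧ y.1 = x.2 ∧ y.2 = x.1 then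
      p ^ (2 : ℤ) - (p ^ (2 : ℤ))⁻¹
    else if x.2 = x.1.rev ∧ x.1.rev < x.1 ∧ y.1 = x.1.rev ∧ y.2 = x.1 then
      (p ^ (2 : ℤ) - (p ^ (2 : ℤ))⁻¹) * (1 - p ^ (2 * rhoTwo N x.1))
    else if x.2 = x.1.rev ∧ y.1 < x.1 ∧ x.1.rev ≠ y.1 ∧ y.2 = y.1.rev then
      -(p ^ (2 : ℤ) - (p ^ (2 : ℤ))⁻¹) * p ^ (rhoTwo N x.1 - rhoTwo N y.1)
    else 0

/-!
Every nonzero entry of `R` either fixes or swaps its index pair, or links two pairs of the form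
`(a, a′)`. The first two preserve a product weight `d_a d_b` for any `d`; the third does so once
`d_a d_{a′}` is independent of `a`, so `R` commutes with `D ⊗ D`. Moving a diagonal matrix across
`C` reverses its diagonal, and `C² = 1` because `ρ_{a′} = -ρ_a`; this gives both identities with
the metric. For `D″` the diagonal satisfies `d_{a′} = -d_a` and `d_a² = -1`.
-/

section Weights

variable {N : ℕ} {p : ℂ} {x y : Fin N × Fin N}

lemma eq_or_eq_swap_or_eq_rev_of_qRmat_ne_zero (h : qRmat N p x y ≠ 0) :
    x = y ∨ x = y.swap ∨ (x.2 = x.1.rev ∧ y.2 = y.1.rev) := by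
  obtain ⟨a, b⟩ := x
  obtain ⟨c, e⟩ := y
  simp only [qRmat, of_apply, Prod.mk.injEq] at h
  simp only [Prod.swap_prod_mk, Prod.mk.injEq]
  split_ifs at h <;> grind

lemma mul_eq_mul_of_qRmat_ne_zero {M : Type*} [CommMagma M] {d : Fin N → M} {c : M}
    (hd : ∀ a, d a * d a.rev = c) (h : qRmat N p x y ≠ 0) :
    d x.1 * d x.2 = d y.1 * d y.2 := by
  rcases eq_or_eq_swap_or_eq_rev_of_qRmat_ne_zero h with rfl | rfl | ⟨hx, hy⟩
  · rfl
  · exact mul_comm _ _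
  · rw [hx, hy, hd, hd]

end Weights

lemma commute_diagonal_of_apply_ne_zero {ι α : Type*} [Fintype ι] [DecidableEq ι]
    [NonUnitalNonAssocCommSemiring α] {A : Matrix ι ι α} {w : ι → α}
    (h : ∀ i j, A i j ≠ 0 → w i = w j) : Commute A (diagonal w) := by
  ext i j
  rw [mul_diagonal, diagonal_mul]
  by_cases hA : A i j = 0
  · simp [hA]
  · rw [h i j hA, mul_comm]

lemma commute_qRmat_kronecker_diagonal {N : ℕ} (p : ℂ) {d : Fin N → ℂ} {c : ℂ}
    (hd : ∀ a, d a * d a.rev = c) : Commute (qRmat N p) (diagonal d ⊗ₖ diagonal d) := by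
  rw [diagonal_kronecker_diagonal]
  exact commute_diagonal_of_apply_ne_zero fun _ _ h => mul_eq_mul_of_qRmat_ne_zero hd h

lemma rhoTwo_rev {N : ℕ} (a : Fin N) : rhoTwo N a.rev = -rhoTwo N a := by
  have hrev : (a.rev : ℤ) = N - (a + 1) := by
    have := a.isLt
    rw [Fin.val_rev]
    omega
  unfold rhoTwo
  rw [hrev]
  split_ifs <;> omega

lemma qMetric_mul_apply {N : ℕ} {κ : Type*} (p : ℂ) (A : Matrix (Fin N) κ ℂ) (a : Fin N) (b : κ) :
    (qMetric N p * A) a b = p ^ (-rhoTwo N a) * A a.rev b := by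
  simp [qMetric, mul_apply]

lemma qMetric_mul_self (N : ℕ) {p : ℂ} (hp : p ≠ 0) : qMetric N p * qMetric N p = 1 := by
  ext a b
  rw [qMetric_mul_apply, qMetric, of_apply, Fin.rev_rev, rhoTwo_rev, neg_neg, one_apply, mul_ite,
    mul_zero, ← zpow_add₀ hp, neg_add_cancel, zpow_zero]
  exact if_congr eq_comm rfl rfl

lemma qMetric_mul_diagonal {N : ℕ} (p : ℂ) (d : Fin N → ℂ) :
    qMetric N p * diagonal d = diagonal (fun a => d a.rev) * qMetric N p := by
  ext a b
  rw [mul_diagonal, diagonal_mul, qMetric, of_apply]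
  split_ifs with h
  · rw [h, mul_comm]
  · simp

lemma diagonal_transpose_mul_qMetric_mul_diagonal {N : ℕ} (p : ℂ) {d : Fin N → ℂ}
    {c : ℂ} (hd : ∀ a, d a * d a.rev = c) :
    (diagonal d)ᵀ * qMetric N p * diagonal d = c • qMetric N p := by
  rw [diagonal_transpose, Matrix.mul_assoc, qMetric_mul_diagonal, ← Matrix.mul_assoc,
    diagonal_mul_diagonal]
  simp only [hd, ← smul_eq_diagonal_mul]

lemma qMetric_transpose_mul_diagonal_mul_qMetric_transpose {N : ℕ} {p : ℂ} (hp : p ≠ 0)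
    (d : Fin N → ℂ) :
    (qMetric N p)ᵀ * diagonal d * (qMetric N p)ᵀ = diagonal fun a => d a.rev :=
  calc (qMetric N p)ᵀ * diagonal d * (qMetric N p)ᵀ
      = (qMetric N p * diagonal d * qMetric N p)ᵀ := by
        simp only [transpose_mul, diagonal_transpose, Matrix.mul_assoc]
    _ = diagonal fun a => d a.rev := by
        rw [qMetric_mul_diagonal, Matrix.mul_assoc, qMetric_mul_self N hp, Matrix.mul_one,
          diagonal_transpose]

/-- Let `N = 2n` be even, fix signs `ε_j ∈ {+1,−1}` with
`ε_{j′} = −ε_j`, and set `D″ = i · diag(ε_1, …, ε_{2n})`.  Then (i) `D″² = −1`;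
(ii) `D″_{aa} · D″_{a′a′} = 1` for all `a`, hence `R · (D″ ⊗ D″) = (D″ ⊗ D″) · R`
and `D″ᵗ C D″ = C`; (iii) `conj D″ = −D″ = Cᵗ D″ Cᵗ`.  Thus `D″` defines an
involutive Hopf algebra automorphism `T ↦ D″ T D″⁻¹` of `SO_q(N)` commuting with the
compact conjugation, whose composition with it yields the real forms `SO*_q(2n)`. -/
theorem Dpp_properties (n : ℕ) (hn : 2 ≤ n) (p : ℂ) (hp : p ≠ 0)
    (ε : Fin (2 * n) → ℝ) (hε : ∀ a, ε a = 1 ∨ ε a = -1)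
    (hanti : ∀ a : Fin (2 * n), ε a.rev = -ε a) :
    ∀ D : Matrix (Fin (2 * n)) (Fin (2 * n)) ℂ,
      D = Matrix.diagonal (fun a => Complex.I * (ε a : ℂ)) →
      D * D = -1 ∧
      (∀ a : Fin (2 * n), D a a * D a.rev a.rev = 1) ∧
      qRmat (2 * n) p * (D ⊗ₖ D) = (D ⊗ₖ D) * qRmat (2 * n) p ∧
      Dᵀ * qMetric (2 * n) p * D = qMetric (2 * n) p ∧
      D.map (starRingEnd ℂ) = -D ∧
      (qMetric (2 * n) p)ᵀ * D * (qMetric (2 * n) p)ᵀ = -D := by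
  rintro D rfl
  set d : Fin (2 * n) → ℂ := fun a => Complex.I * (ε a : ℂ) with d_def
  have d_mul_self (a) : d a * d a = -1 := by
    rcases hε a with h | h <;> simp [d_def, h]
  have d_rev (a) : d a.rev = -d a := by simp [d_def, hanti]
  have d_mul_rev (a) : d a * d a.rev = 1 := by rw [d_rev, mul_neg, d_mul_self, neg_neg]
  have conj_d (a) : starRingEnd ℂ (d a) = -d a := by simp [d_def]
  refine ⟨?_, fun a => by simpa using d_mul_rev a,
    commute_qRmat_kronecker_diagonal p d_mul_rev, ?_, ?_, ?_⟩
  · simp only [diagonal_mul_diagonal, d_mul_self, ← diagonal_one, diagonal_neg]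
  · rw [diagonal_transpose_mul_qMetric_mul_diagonal p d_mul_rev, one_smul]
  · simp only [diagonal_map (map_zero _), conj_d, diagonal_neg]
  · simp only [qMetric_transpose_mul_diagonal_mul_qMetric_transpose hp, d_rev, diagonal_neg]
end
end
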